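/- Let (K, φ) be a topological dynamical system and let q : K → L be a projection onto its maximal trivial factor. Then the Koopman operator T_φ is mean ergodic on C(K) if and only if the pushforward map μ ↦ q_*μ from the space M_φ(K) of φ-invariant regular complex Borel measures on K to the space M(L) of all regular complex Borel measures on L is a linear bijection. -/

import Mathlib

open MeasureTheory Filter

/-- The Koopman operator of `φ` is mean ergodic on `C(K)`: for every continuous function
`f`, the Cesàro averages `A_n f = (1/n) ∑_{k<n} f ∘ φ^k` converge in the sup norm
(i.e. uniformly) to some function. -/
def MeanErgodic {K : Type*} [TopologicalSpace K] (φ : K → K) : Prop :=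
  ∀ f : C(K, ℂ), ∃ g : K → ℂ,
    TendstoUniformly (fun (n : ℕ) (x : K) => (n : ℂ)⁻¹ • ∑ k ∈ Finset.range n, f (φ^[k] x))
      g atTop

/-- A complex Borel measure is regular if the total variations of its real and imaginary
parts are regular measures. -/
def IsRegularComplexMeasure {α : Type*} [MeasurableSpace α] [TopologicalSpace α]
    (μ : ComplexMeasure α) : Prop :=
  (ComplexMeasure.re μ).totalVariation.Regular ∧ (ComplexMeasure.im μ).totalVariation.Regular

/-!
The real and imaginary parts reduce everything to real functions and signed measures.

Suppose that the Cesàro means converge uniformly. The limit of `Aₙ f` is invariant, hence of the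
form `(E f) ∘ q` with a positive linear operator `E : C(K) → C(L)`. For every positive regular `ν`
on `L` the functional `f ↦ ∫ E f dν` is represented by an invariant measure above `ν`, and by
dominated convergence `∫ f dμ = ∫ E f d(q_* μ)` for every invariant `μ`, so that `q_* μ`
determines `μ`.

Conversely, suppose that the pushforward map is bijective and test the uniform Cauchy property of
`Aₙ f` along an ultrafilter on triples `(m, n, x)`. The functionals `f ↦ Aₘ f (x)` and
`f ↦ Aₙ f (x)` converge along it to integrals against invariant measures `μ` and `ν` (Krylov and
Bogoliubov). The averages fix functions of the form `g ∘ q`, so `q_* μ = q_* ν` and thus `μ = ν`.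
-/

open scoped Topology Uniformity

section RegularMeasures

variable {X Y : Type*} [TopologicalSpace X] [MeasurableSpace X] [BorelSpace X]
  [TopologicalSpace Y] [MeasurableSpace Y] [BorelSpace Y]

theorem integrable_continuousMap [CompactSpace X] (μ : Measure X) [IsFiniteMeasure μ]
    (f : C(X, ℝ)) : Integrable f μ :=
  f.continuous.integrable_of_hasCompactSupport (HasCompactSupport.of_compactSpace _)

theorem integral_map_continuousMap (μ : Measure X) {p : X → Y} (hp : Continuous p)
    (f : C(Y, ℝ)) : ∫ y, f y ∂μ.map p = ∫ x, f.comp ⟨p, hp⟩ x ∂μ :=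
  integral_map hp.aemeasurable f.continuous.aestronglyMeasurable

theorem regular_of_le [T2Space X] {μ ν : Measure X} [IsFiniteMeasure ν] [ν.Regular]
    (h : μ ≤ ν) : μ.Regular := by
  have : IsFiniteMeasure μ := isFiniteMeasure_of_le ν h
  have : μ.InnerRegular := by
    refine ⟨fun s hs r hr => ?_⟩
    obtain ⟨K, hKs, hK, hlt⟩ := hs.exists_isCompact_sdiff_lt (μ := ν) (measure_ne_top ν s)
      (tsub_pos_of_lt hr).ne'
    refine ⟨K, hKs, hK, ?_⟩
    by_contra! hKr
    refine lt_irrefl (μ s) ?_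
    calc μ s ≤ μ K + μ (s \ K) := by
          rw [add_comm, ← measure_sdiff_add_inter s hK.measurableSet]
          gcongr
          exact Set.inter_subset_right
      _ < r + (μ s - r) :=
          ENNReal.add_lt_add_of_le_of_lt (measure_ne_top μ K) hKr ((h _).trans_lt hlt)
      _ = μ s := add_tsub_cancel_of_le hr.le
  infer_instance

theorem regular_map [T2Space Y] (μ : Measure X) [IsFiniteMeasure μ] [μ.Regular]
    {f : X → Y} (hf : Continuous f) : (μ.map f).Regular := by
  have := Measure.InnerRegularCompactLTTop.map_of_continuous (μ := μ) hf
  infer_instance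

theorem measure_ext_of_integral_continuousMap [CompactSpace X] [T2Space X] {μ ν : Measure X}
    [μ.Regular] [ν.Regular] (h : ∀ f : C(X, ℝ), ∫ x, f x ∂μ = ∫ x, f x ∂ν) : μ = ν :=
  Measure.ext_of_integral_eq_on_compactlySupported fun f => h f.toContinuousMap

theorem exists_regular_measure_integral_eq [CompactSpace X] [T2Space X]
    (Λ : C(X, ℝ) →ₗ[ℝ] ℝ) (hΛ : ∀ f, 0 ≤ f → 0 ≤ Λ f) :
    ∃ μ : Measure X, IsFiniteMeasure μ ∧ μ.Regular ∧ ∀ f : C(X, ℝ), ∫ x, f x ∂μ = Λ f := by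
  let Λc : CompactlySupportedContinuousMap X ℝ →ₗ[ℝ] ℝ :=
    { toFun := fun f => Λ f.toContinuousMap
      map_add' := fun f g => map_add Λ f.toContinuousMap g.toContinuousMap
      map_smul' := fun c f => map_smul Λ c f.toContinuousMap }
  let Λp := PositiveLinearMap.mk₀ Λc fun f hf => hΛ f.toContinuousMap hf
  exact ⟨RealRMK.rieszMeasure Λp, inferInstance, inferInstance, fun f =>
    RealRMK.integral_rieszMeasure Λp (CompactlySupportedContinuousMap.continuousMapEquiv f)⟩

end RegularMeasures

section RegularSignedMeasures

variable {X Y : Type*} [MeasurableSpace X] [MeasurableSpace Y]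

theorem map_toSignedMeasure (μ : Measure X) [IsFiniteMeasure μ] {f : X → Y} (hf : Measurable f) :
    μ.toSignedMeasure.map f = (μ.map f).toSignedMeasure := by
  ext s hs
  rw [VectorMeasure.map_apply _ hf hs, Measure.toSignedMeasure_apply_measurable (hf hs),
    Measure.toSignedMeasure_apply_measurable hs, map_measureReal_apply hf hs]

theorem signedMeasure_map_sub (s t : SignedMeasure X) {f : X → Y} (hf : Measurable f) :
    (s - t).map f = s.map f - t.map f := by
  ext i hi
  simp only [VectorMeasure.map_apply _ hf hi, sub_apply]

theorem totalVariation_toSignedMeasure (μ : Measure X) [IsFiniteMeasure μ] :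
    μ.toSignedMeasure.totalVariation = μ := by
  rw [SignedMeasure.totalVariation_eq_variation, Measure.variation_toSignedMeasure]

instance isFiniteMeasure_variation (s : SignedMeasure X) : IsFiniteMeasure s.variation :=
  s.totalVariation_eq_variation ▸ inferInstance

variable [TopologicalSpace X] [BorelSpace X]

theorem signedMeasure_integrable_continuousMap [CompactSpace X] (s : SignedMeasure X)
    (f : C(X, ℝ)) : s.Integrable f :=
  integrable_continuousMap s.variation f

theorem signedMeasure_integral_map_continuousMap [CompactSpace X] [TopologicalSpace Y]
    [BorelSpace Y] (s : SignedMeasure X) {p : X → Y} (hp : Continuous p) (f : C(Y, ℝ)) :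
    ∫ᵛ y, f y ∂<•(s.map p) = ∫ᵛ x, f.comp ⟨p, hp⟩ x ∂<•s :=
  VectorMeasure.integral_map hp.measurable f.continuous.aestronglyMeasurable
    (signedMeasure_integrable_continuousMap s (f.comp ⟨p, hp⟩))

variable [T2Space X]

theorem regular_totalVariation_toSignedMeasure_sub (μ ν : Measure X) [IsFiniteMeasure μ]
    [IsFiniteMeasure ν] [μ.Regular] [ν.Regular] :
    (μ.toSignedMeasure - ν.toSignedMeasure).totalVariation.Regular := by
  refine regular_of_le (ν := μ + ν) ?_
  rw [SignedMeasure.totalVariation, Measure.toJordanDecomposition_toSignedMeasure_sub]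
  exact add_le_add Measure.sub_le Measure.sub_le

theorem exists_regular_eq_toSignedMeasure_sub {s : SignedMeasure X}
    (hs : s.totalVariation.Regular) :
    ∃ (μ ν : Measure X) (_ : IsFiniteMeasure μ) (_ : IsFiniteMeasure ν),
      μ.Regular ∧ ν.Regular ∧ s = μ.toSignedMeasure - ν.toSignedMeasure :=
  ⟨s.toJordanDecomposition.posPart, s.toJordanDecomposition.negPart, inferInstance, inferInstance,
    regular_of_le (ν := s.totalVariation) (Measure.le_add_right le_rfl),
    regular_of_le (ν := s.totalVariation) (Measure.le_add_left le_rfl),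
    s.toSignedMeasure_toJordanDecomposition.symm⟩

theorem signedMeasure_ext_of_integral_continuousMap [CompactSpace X] {s t : SignedMeasure X}
    (hs : s.totalVariation.Regular) (ht : t.totalVariation.Regular)
    (h : ∀ f : C(X, ℝ), ∫ᵛ x, f x ∂<•s = ∫ᵛ x, f x ∂<•t) : s = t := by
  obtain ⟨s₁, s₂, _, _, _, _, rfl⟩ := exists_regular_eq_toSignedMeasure_sub hs
  obtain ⟨t₁, t₂, _, _, _, _, rfl⟩ := exists_regular_eq_toSignedMeasure_sub ht
  rw [sub_eq_sub_iff_add_eq_add, ← Measure.toSignedMeasure_add, ← Measure.toSignedMeasure_add,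
    Measure.toSignedMeasure_eq_toSignedMeasure_iff]
  refine measure_ext_of_integral_continuousMap fun f => ?_
  have hf := h f
  have hi := signedMeasure_integrable_continuousMap (f := f)
  rw [VectorMeasure.integral_sub_vectorMeasure (hi _) (hi _),
    VectorMeasure.integral_sub_vectorMeasure (hi _) (hi _)] at hf
  simp only [VectorMeasure.integral_toSignedMeasure] at hf
  have hi' (μ : Measure X) [IsFiniteMeasure μ] := integrable_continuousMap μ f
  rw [integral_add_measure (hi' _) (hi' _), integral_add_measure (hi' _) (hi' _)]
  linarith

end RegularSignedMeasures

section ComplexMeasure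

variable {X Y : Type*} [MeasurableSpace X] [MeasurableSpace Y]

theorem complexMeasure_ext_re_im {μ ν : ComplexMeasure X}
    (hre : ComplexMeasure.re μ = ComplexMeasure.re ν)
    (him : ComplexMeasure.im μ = ComplexMeasure.im ν) : μ = ν :=
  ComplexMeasure.equivSignedMeasure.injective (Prod.ext hre him)

theorem re_complexMeasure_map (μ : ComplexMeasure X) {f : X → Y} (hf : Measurable f) :
    ComplexMeasure.re (μ.map f) = (ComplexMeasure.re μ).map f := by
  ext s hs
  rw [VectorMeasure.map_apply _ hf hs]
  exact congrArg Complex.re (VectorMeasure.map_apply μ hf hs)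

theorem im_complexMeasure_map (μ : ComplexMeasure X) {f : X → Y} (hf : Measurable f) :
    ComplexMeasure.im (μ.map f) = (ComplexMeasure.im μ).map f := by
  ext s hs
  rw [VectorMeasure.map_apply _ hf hs]
  exact congrArg Complex.im (VectorMeasure.map_apply μ hf hs)

theorem complexMeasure_map_eq_iff {μ : ComplexMeasure X} {ν : ComplexMeasure Y} {f : X → Y}
    (hf : Measurable f) :
    μ.map f = ν ↔ (ComplexMeasure.re μ).map f = ComplexMeasure.re ν ∧
      (ComplexMeasure.im μ).map f = ComplexMeasure.im ν := by
  rw [← re_complexMeasure_map μ hf, ← im_complexMeasure_map μ hf]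
  exact ⟨by rintro rfl; exact ⟨rfl, rfl⟩, fun h => complexMeasure_ext_re_im h.1 h.2⟩

/-- The signed measure `s` is a preimage of `ν` under the pushforward map `s ↦ q_* s` on the space
of regular `φ`-invariant signed measures. -/
def IsInvariantLift [TopologicalSpace X] (φ : X → X) (q : X → Y) (ν : SignedMeasure Y)
    (s : SignedMeasure X) : Prop :=
  (s.totalVariation.Regular ∧ s.map φ = s) ∧ s.map q = ν

theorem forall_existsUnique_complexMeasure_iff [TopologicalSpace X] [TopologicalSpace Y]
    {φ : X → X} (hφ : Measurable φ) {q : X → Y} (hq : Measurable q) :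
    (∀ ν : ComplexMeasure Y, IsRegularComplexMeasure ν →
      ∃! μ : ComplexMeasure X, (IsRegularComplexMeasure μ ∧ μ.map φ = μ) ∧ μ.map q = ν) ↔
    ∀ ν : SignedMeasure Y, ν.totalVariation.Regular → ∃! s, IsInvariantLift φ q ν s := by
  have hlift (μ : ComplexMeasure X) (ν : ComplexMeasure Y) :
      ((IsRegularComplexMeasure μ ∧ μ.map φ = μ) ∧ μ.map q = ν) ↔
        IsInvariantLift φ q (ComplexMeasure.re ν) (ComplexMeasure.re μ) ∧
          IsInvariantLift φ q (ComplexMeasure.im ν) (ComplexMeasure.im μ) := by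
    rw [complexMeasure_map_eq_iff hφ, complexMeasure_map_eq_iff hq]
    simp only [IsRegularComplexMeasure, IsInvariantLift]
    tauto
  simp only [hlift]
  constructor
  · intro h ν hν
    obtain ⟨μ, ⟨hre, -⟩, huniq⟩ := h (ν.toComplexMeasure ν) ⟨hν, hν⟩
    exact ⟨ComplexMeasure.re μ, hre, fun s hs =>
      congrArg ComplexMeasure.re (huniq (s.toComplexMeasure s) ⟨hs, hs⟩)⟩
  · intro h ν hν
    obtain ⟨s, hs, hs_uniq⟩ := h _ hν.1
    obtain ⟨t, ht, ht_uniq⟩ := h _ hν.2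
    exact ⟨s.toComplexMeasure t, ⟨hs, ht⟩, fun μ hμ =>
      complexMeasure_ext_re_im (hs_uniq _ hμ.1) (ht_uniq _ hμ.2)⟩

end ComplexMeasure

section MeanErgodic

variable {K : Type*}

theorem birkhoffAverage_re (φ : K → K) (f : K → ℂ) (n : ℕ) (x : K) :
    birkhoffAverage ℝ φ (fun y => (f y).re) n x = (birkhoffAverage ℂ φ f n x).re :=
  (map_birkhoffAverage ℂ ℝ Complex.reCLM φ f n x).symm

theorem birkhoffAverage_im (φ : K → K) (f : K → ℂ) (n : ℕ) (x : K) :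
    birkhoffAverage ℝ φ (fun y => (f y).im) n x = (birkhoffAverage ℂ φ f n x).im :=
  (map_birkhoffAverage ℂ ℝ Complex.imCLM φ f n x).symm

variable [TopologicalSpace K]

theorem meanErgodic_iff_forall_birkhoffAverage {φ : K → K} :
    MeanErgodic φ ↔
      ∀ f : C(K, ℂ), ∃ g : K → ℂ, TendstoUniformly (birkhoffAverage ℂ φ f) g atTop :=
  Iff.rfl

theorem meanErgodic_iff_forall_real {φ : K → K} :
    MeanErgodic φ ↔
      ∀ f : C(K, ℝ), ∃ g : K → ℝ, TendstoUniformly (birkhoffAverage ℝ φ f) g atTop := by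
  rw [meanErgodic_iff_forall_birkhoffAverage]
  constructor
  · intro h f
    obtain ⟨g, hg⟩ := h ⟨fun x => (f x : ℂ), by fun_prop⟩
    have hre : birkhoffAverage ℝ φ f =
        fun n => Complex.re ∘ birkhoffAverage ℂ φ (fun x => (f x : ℂ)) n :=
      funext₂ (birkhoffAverage_re φ fun x => (f x : ℂ))
    exact ⟨Complex.re ∘ g, hre ▸ Complex.uniformContinuous_re.comp_tendstoUniformly hg⟩
  · intro h f
    obtain ⟨g, hg⟩ := h ⟨fun x => (f x).re, by fun_prop⟩
    obtain ⟨k, hk⟩ := h ⟨fun x => (f x).im, by fun_prop⟩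
    have hpair : birkhoffAverage ℂ φ f = fun n x => Complex.equivRealProdCLM.symm
        (birkhoffAverage ℝ φ (fun y => (f y).re) n x,
          birkhoffAverage ℝ φ (fun y => (f y).im) n x) := funext₂ fun n x =>
      Complex.ext (birkhoffAverage_re φ f n x).symm (birkhoffAverage_im φ f n x).symm
    rw [hpair]
    have hgk := Complex.equivRealProdCLM.symm.lipschitz.uniformContinuous.comp_tendstoUniformly
      (hg.prodMk hk)
    exact ⟨_, fun u hu => tendsto_diag.eventually (hgk u hu)⟩

end MeanErgodic

section BirkhoffAverage

variable {K : Type*}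

theorem birkhoffAverage_comp_map (R : Type*) {M : Type*} [DivisionSemiring R] [AddCommMonoid M]
    [Module R M] (φ : K → K) (f : K → M) (n : ℕ) (x : K) :
    birkhoffAverage R φ (f ∘ φ) n x = birkhoffAverage R φ f n (φ x) := by
  simp only [birkhoffAverage, birkhoffSum, Function.comp_apply, ← Function.iterate_succ_apply,
    ← Function.iterate_succ_apply']

theorem birkhoffAverage_comp_factor {L : Type*} {φ : K → K} {q : K → L} (hqφ : q ∘ φ = q)
    (g : L → ℝ) {n : ℕ} (hn : n ≠ 0) : birkhoffAverage ℝ φ (g ∘ q) n = g ∘ q :=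
  birkhoffAverage_of_comp_eq ℝ (by rw [Function.comp_assoc, hqφ]) (Nat.cast_ne_zero.2 hn)

theorem birkhoffAverage_nonneg (φ : K → K) {f : K → ℝ} (hf : 0 ≤ f) (n : ℕ) (x : K) :
    0 ≤ birkhoffAverage ℝ φ f n x :=
  smul_nonneg (by positivity) (Finset.sum_nonneg fun _ _ => hf _)

variable [TopologicalSpace K]

/-- The linear functional `f ↦ A_n f (x)` on `C(K, ℝ)` given by the Birkhoff average of length `n`
along the orbit of `x`. -/
noncomputable def birkhoffFunctional (φ : K → K) (n : ℕ) (x : K) : C(K, ℝ) →ₗ[ℝ] ℝ where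
  toFun f := birkhoffAverage ℝ φ f n x
  map_add' f g := congrFun₂ (birkhoffAverage_add (R := ℝ) (f := φ) (g := f) (g' := g)) n x
  map_smul' c f := (map_birkhoffAverage ℝ ℝ (LinearMap.lsmul ℝ ℝ c) φ f n x).symm

theorem continuous_birkhoffAverage {φ : K → K} (hφ : Continuous φ) (f : C(K, ℝ)) (n : ℕ) :
    Continuous (birkhoffAverage ℝ φ f n) :=
  have hsum : Continuous (birkhoffSum φ f n) :=
    continuous_finsetSum _ fun k _ => f.continuous.comp (hφ.iterate k)
  hsum.const_smul (n : ℝ)⁻¹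

variable [CompactSpace K]

theorem norm_birkhoffAverage_le (φ : K → K) (f : C(K, ℝ)) (n : ℕ) (x : K) :
    ‖birkhoffAverage ℝ φ f n x‖ ≤ ‖f‖ := by
  obtain rfl | hn := n.eq_zero_or_pos
  · simp
  calc ‖(n : ℝ)⁻¹ • ∑ k ∈ Finset.range n, f (φ^[k] x)‖
      = (n : ℝ)⁻¹ * ‖∑ k ∈ Finset.range n, f (φ^[k] x)‖ := by
        rw [norm_smul, norm_inv, RCLike.norm_natCast]
    _ ≤ (n : ℝ)⁻¹ * (n * ‖f‖) := by
        gcongr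
        simpa using norm_sum_le_of_le (Finset.range n) fun k _ => f.norm_coe_le_norm (φ^[k] x)
    _ = ‖f‖ := inv_mul_cancel_left₀ (by positivity) _

theorem norm_birkhoffAverage_map_sub_le (φ : K → K) (f : C(K, ℝ)) (n : ℕ) (x : K) :
    ‖birkhoffAverage ℝ φ f n (φ x) - birkhoffAverage ℝ φ f n x‖ ≤ 2 * ‖f‖ / n := by
  rw [← dist_eq_norm, dist_birkhoffAverage_apply_birkhoffAverage]
  gcongr
  exact f.dist_le_two_norm _ _

end BirkhoffAverage

section MaximalTrivialFactor

variable {K L : Type*} [TopologicalSpace K] [TopologicalSpace L]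

/-- `q : K → L` is a projection onto the maximal trivial factor of `(K, φ)`, in terms of real-valued
functions: it is a continuous surjection, `φ` acts trivially on its fibers, and every continuous
`φ`-invariant function factors through it. -/
structure IsMaximalTrivialFactor (φ : K → K) (q : K → L) : Prop where
  continuous : Continuous q
  surjective : Function.Surjective q
  comp_eq : q ∘ φ = q
  exists_eq_comp : ∀ f : C(K, ℝ), f ∘ φ = f → ∃ g : C(L, ℝ), ⇑f = g ∘ q

theorem isMaximalTrivialFactor_of_complex [T35Space L] {φ : K → K} {q : K → L}
    (hq : Continuous q) (hqsurj : Function.Surjective q)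
    (hmax : ∀ f : C(K, ℂ), (∀ x, f (φ x) = f x) ↔ ∃ g : C(L, ℂ), f = g.comp ⟨q, hq⟩) :
    IsMaximalTrivialFactor φ q where
  continuous := hq
  surjective := hqsurj
  comp_eq := by
    by_contra! hne
    obtain ⟨x, hx⟩ := Function.ne_iff.1 hne
    obtain ⟨g, hg : Continuous g, hgx⟩ := separatesPoints_continuous_of_t35Space hx
    have hinv := (hmax ⟨fun y => (g (q y) : ℂ), by fun_prop⟩).2
      ⟨⟨fun y => (g y : ℂ), by fun_prop⟩, rfl⟩
    exact hgx (Complex.ofReal_injective (hinv x))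
  exists_eq_comp f hf := by
    obtain ⟨g, hg⟩ := (hmax ⟨fun x => (f x : ℂ), by fun_prop⟩).1 fun x =>
      congrArg Complex.ofReal (congrFun hf x)
    exact ⟨⟨fun y => (g y).re, by fun_prop⟩, funext fun x =>
      congrArg Complex.re (DFunLike.congr_fun hg x)⟩

end MaximalTrivialFactor

section InvariantIntegral

variable {K : Type*} [TopologicalSpace K] [CompactSpace K] [MeasurableSpace K] [BorelSpace K]
  {φ : K → K}

theorem signedMeasure_integral_comp_iterate (hφ : Continuous φ) {s : SignedMeasure K}
    (hs : s.map φ = s) (f : C(K, ℝ)) (k : ℕ) : ∫ᵛ x, f (φ^[k] x) ∂<•s = ∫ᵛ x, f x ∂<•s := by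
  induction k with
  | zero => rfl
  | succ k ih =>
    rw [← ih]
    nth_rw 2 [← hs]
    exact (signedMeasure_integral_map_continuousMap s hφ (f.comp ⟨φ^[k], hφ.iterate k⟩)).symm

theorem signedMeasure_integral_birkhoffAverage (hφ : Continuous φ) {s : SignedMeasure K}
    (hs : s.map φ = s) (f : C(K, ℝ)) {n : ℕ} (hn : n ≠ 0) :
    ∫ᵛ x, birkhoffAverage ℝ φ f n x ∂<•s = ∫ᵛ x, f x ∂<•s := by
  have hint (k : ℕ) : s.Integrable fun x => f (φ^[k] x) :=
    signedMeasure_integrable_continuousMap s (f.comp ⟨φ^[k], hφ.iterate k⟩)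
  calc ∫ᵛ x, birkhoffAverage ℝ φ f n x ∂<•s
      = (n : ℝ)⁻¹ • ∑ k ∈ Finset.range n, ∫ᵛ x, f (φ^[k] x) ∂<•s := by
        simp only [birkhoffAverage, birkhoffSum, VectorMeasure.integral_fun_smul]
        rw [VectorMeasure.integral_finsetSum _ fun k _ => hint k]
    _ = (n : ℝ)⁻¹ • (n • ∫ᵛ x, f x ∂<•s) := by
        simp only [signedMeasure_integral_comp_iterate hφ hs, Finset.sum_const, Finset.card_range]
    _ = ∫ᵛ x, f x ∂<•s := by
        rw [nsmul_eq_mul, smul_eq_mul, inv_mul_cancel_left₀ (Nat.cast_ne_zero.2 hn)]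

end InvariantIntegral

section LimitOperator

variable {K L : Type*} [TopologicalSpace K] [TopologicalSpace L] {φ : K → K} {q : K → L}

/-- `E` is the limit of the Cesàro means of the Koopman operator of `φ`, read as an operator into
`C(L, ℝ)`: the averages of `f` converge on the fiber over `y` to `E f y`. -/
def IsLimitOperator (φ : K → K) (q : K → L) (E : C(K, ℝ) → C(L, ℝ)) : Prop :=
  ∀ (f : C(K, ℝ)) (x : K), Tendsto (birkhoffAverage ℝ φ f · x) atTop (𝓝 (E f (q x)))

theorem exists_isLimitOperator [CompactSpace K] (hφ : Continuous φ)
    (hfac : IsMaximalTrivialFactor φ q)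
    (herg : ∀ f : C(K, ℝ), ∃ g : K → ℝ, TendstoUniformly (birkhoffAverage ℝ φ f) g atTop) :
    ∃ E, IsLimitOperator φ q E := by
  have hlim (f : C(K, ℝ)) : ∃ g : C(L, ℝ), ∀ x,
      Tendsto (birkhoffAverage ℝ φ f · x) atTop (𝓝 (g (q x))) := by
    obtain ⟨g, hg⟩ := herg f
    have hgc : Continuous g := hg.continuous <|
      Frequently.of_forall fun n => continuous_birkhoffAverage hφ f n
    have hinv : g ∘ φ = g := funext fun x => sub_eq_zero.1 <| tendsto_nhds_unique
      ((hg.tendsto_at (φ x)).sub (hg.tendsto_at x))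
      (tendsto_birkhoffAverage_apply_sub_birkhoffAverage' ℝ
        (isCompact_range f.continuous).isBounded φ x)
    obtain ⟨h, rfl : g = h ∘ q⟩ := hfac.exists_eq_comp ⟨g, hgc⟩ hinv
    exact ⟨h, hg.tendsto_at⟩
  choose E hE using hlim
  exact ⟨E, hE⟩

namespace IsLimitOperator

variable {E : C(K, ℝ) → C(L, ℝ)}

theorem eq_of_tendsto (hE : IsLimitOperator φ q E) (hq : Function.Surjective q) {f : C(K, ℝ)}
    {g : C(L, ℝ)} (hg : ∀ x, Tendsto (birkhoffAverage ℝ φ f · x) atTop (𝓝 (g (q x)))) :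
    E f = g :=
  ContinuousMap.ext <| hq.forall.2 fun x => tendsto_nhds_unique (hE f x) (hg x)

theorem map_add (hE : IsLimitOperator φ q E) (hq : Function.Surjective q) (f g : C(K, ℝ)) :
    E (f + g) = E f + E g :=
  hE.eq_of_tendsto hq fun x => ((hE f x).add (hE g x)).congr fun n =>
    ((birkhoffFunctional φ n x).map_add f g).symm

theorem map_smul (hE : IsLimitOperator φ q E) (hq : Function.Surjective q) (c : ℝ)
    (f : C(K, ℝ)) : E (c • f) = c • E f :=
  hE.eq_of_tendsto hq fun x => ((hE f x).const_smul c).congr fun n =>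
    ((birkhoffFunctional φ n x).map_smul c f).symm

theorem nonneg (hE : IsLimitOperator φ q E) (hq : Function.Surjective q) {f : C(K, ℝ)}
    (hf : 0 ≤ f) : 0 ≤ E f :=
  hq.forall.2 fun x => ge_of_tendsto' (hE f x) fun n => birkhoffAverage_nonneg φ hf n x

theorem apply_comp_map (hE : IsLimitOperator φ q E) (hφ : Continuous φ)
    (hfac : IsMaximalTrivialFactor φ q) (f : C(K, ℝ)) : E (f.comp ⟨φ, hφ⟩) = E f :=
  hE.eq_of_tendsto hfac.surjective fun x => by
    rw [← congrFun hfac.comp_eq x]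
    exact (hE f (φ x)).congr fun n => (birkhoffAverage_comp_map ℝ φ f n x).symm

theorem apply_comp_factor (hE : IsLimitOperator φ q E) (hfac : IsMaximalTrivialFactor φ q)
    (g : C(L, ℝ)) : E (g.comp ⟨q, hfac.continuous⟩) = g :=
  hE.eq_of_tendsto hfac.surjective fun x => tendsto_const_nhds.congr' <| by
    filter_upwards [eventually_ne_atTop 0] with n hn
    exact (congrFun (birkhoffAverage_comp_factor hfac.comp_eq g hn) x).symm

variable [CompactSpace K] [MeasurableSpace K] [BorelSpace K] [MeasurableSpace L] [BorelSpace L]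

theorem integral_eq (hE : IsLimitOperator φ q E) (hφ : Continuous φ) (hq : Continuous q)
    {s : SignedMeasure K} (hs : s.map φ = s) (f : C(K, ℝ)) :
    ∫ᵛ x, f x ∂<•s = ∫ᵛ y, E f y ∂<•(s.map q) := by
  have hlim : Tendsto (fun n => ∫ᵛ x, birkhoffAverage ℝ φ f n x ∂<•s) atTop
      (𝓝 (∫ᵛ x, E f (q x) ∂<•s)) :=
    VectorMeasure.tendsto_integral_of_dominated_convergence (fun _ => ‖f‖)
      (fun n => (continuous_birkhoffAverage hφ f n).aestronglyMeasurable) (integrable_const _)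
      (fun n => ae_of_all _ (norm_birkhoffAverage_le φ f n)) (ae_of_all _ (hE f))
  rw [signedMeasure_integral_map_continuousMap s hq]
  refine tendsto_nhds_unique (tendsto_const_nhds.congr' ?_) hlim
  filter_upwards [eventually_ne_atTop 0] with n hn
  exact (signedMeasure_integral_birkhoffAverage hφ hs f hn).symm

variable [T2Space K] [CompactSpace L] [T2Space L]

theorem exists_invariant_measure_map_eq (hE : IsLimitOperator φ q E) (hφ : Continuous φ)
    (hfac : IsMaximalTrivialFactor φ q) (ν : Measure L) [IsFiniteMeasure ν] [ν.Regular] :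
    ∃ (μ : Measure K) (_ : IsFiniteMeasure μ), μ.Regular ∧ μ.map φ = μ ∧ μ.map q = ν := by
  let Λ : C(K, ℝ) →ₗ[ℝ] ℝ :=
    { toFun := fun f => ∫ y, E f y ∂ν
      map_add' := fun f g => by
        rw [hE.map_add hfac.surjective]
        exact integral_add (integrable_continuousMap ν _) (integrable_continuousMap ν _)
      map_smul' := fun c f => by
        rw [hE.map_smul hfac.surjective]
        exact integral_const_mul c _ }
  obtain ⟨μ, _, _, hμ⟩ := exists_regular_measure_integral_eq Λ fun f hf =>
    integral_nonneg (hE.nonneg hfac.surjective hf)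
  have hφreg := regular_map μ hφ
  have hqreg := regular_map μ hfac.continuous
  refine ⟨μ, inferInstance, inferInstance, measure_ext_of_integral_continuousMap fun f => ?_,
    measure_ext_of_integral_continuousMap fun g => ?_⟩
  · rw [integral_map_continuousMap μ hφ, hμ, hμ]
    exact congrArg (fun g : C(L, ℝ) => ∫ y, g y ∂ν) (hE.apply_comp_map hφ hfac f)
  · rw [integral_map_continuousMap μ hfac.continuous, hμ]
    exact congrArg (fun g : C(L, ℝ) => ∫ y, g y ∂ν) (hE.apply_comp_factor hfac g)

theorem existsUnique_isInvariantLift (hE : IsLimitOperator φ q E) (hφ : Continuous φ)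
    (hfac : IsMaximalTrivialFactor φ q) {ν : SignedMeasure L} (hν : ν.totalVariation.Regular) :
    ∃! s, IsInvariantLift φ q ν s := by
  refine existsUnique_of_exists_of_unique ?_ ?_
  · obtain ⟨ν₁, ν₂, _, _, _, _, rfl⟩ := exists_regular_eq_toSignedMeasure_sub hν
    obtain ⟨μ₁, _, _, hφ₁, hq₁⟩ := hE.exists_invariant_measure_map_eq hφ hfac ν₁
    obtain ⟨μ₂, _, _, hφ₂, hq₂⟩ := hE.exists_invariant_measure_map_eq hφ hfac ν₂
    refine ⟨μ₁.toSignedMeasure - μ₂.toSignedMeasure,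
      ⟨regular_totalVariation_toSignedMeasure_sub μ₁ μ₂, ?_⟩, ?_⟩
    · rw [signedMeasure_map_sub _ _ hφ.measurable, map_toSignedMeasure _ hφ.measurable,
        map_toSignedMeasure _ hφ.measurable]
      simp only [hφ₁, hφ₂]
    · have hq := hfac.continuous.measurable
      rw [signedMeasure_map_sub _ _ hq, map_toSignedMeasure _ hq, map_toSignedMeasure _ hq]
      simp only [hq₁, hq₂]
  · rintro s t ⟨⟨hs, hsφ⟩, hsq⟩ ⟨⟨ht, htφ⟩, htq⟩
    refine signedMeasure_ext_of_integral_continuousMap hs ht fun f => ?_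
    rw [hE.integral_eq hφ hfac.continuous hsφ, hE.integral_eq hφ hfac.continuous htφ, hsq, htq]

end IsLimitOperator

end LimitOperator

section KrylovBogoliubov

variable {K : Type*} [TopologicalSpace K] [CompactSpace K] {φ : K → K}

theorem exists_tendsto_birkhoffAverage_ultrafilter {ι : Type*} (U : Ultrafilter ι) (n : ι → ℕ)
    (x : ι → K) (f : C(K, ℝ)) :
    ∃ a, Tendsto (fun i => birkhoffAverage ℝ φ f (n i) (x i)) U (𝓝 a) := by
  obtain ⟨a, -, ha⟩ := (isCompact_closedBall (0 : ℝ) ‖f‖).ultrafilter_le_nhds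
    (U.map fun i => birkhoffAverage ℝ φ f (n i) (x i)) <| by
      refine tendsto_principal.2 (Eventually.of_forall fun i => ?_)
      exact mem_closedBall_zero_iff.2 (norm_birkhoffAverage_le φ f (n i) (x i))
  exact ⟨a, ha⟩

theorem tendsto_birkhoffAverage_map_sub {ι : Type*} {l : Filter ι} {n : ι → ℕ}
    (hn : Tendsto n l atTop) (x : ι → K) (f : C(K, ℝ)) :
    Tendsto (fun i => birkhoffAverage ℝ φ f (n i) (φ (x i)) - birkhoffAverage ℝ φ f (n i) (x i))
      l (𝓝 0) := by
  have hbound : Tendsto (fun i => 2 * ‖f‖ / (n i : ℝ)) l (𝓝 0) :=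
    tendsto_const_nhds.div_atTop (tendsto_natCast_atTop_atTop.comp hn)
  exact squeeze_zero_norm (fun i => norm_birkhoffAverage_map_sub_le φ f (n i) (x i)) hbound

variable [T2Space K] [MeasurableSpace K] [BorelSpace K]

theorem exists_invariant_measure_tendsto_birkhoffAverage (hφ : Continuous φ) {ι : Type*}
    (U : Ultrafilter ι) {n : ι → ℕ} (hn : Tendsto n U atTop) (x : ι → K) :
    ∃ (μ : Measure K) (_ : IsFiniteMeasure μ), μ.Regular ∧ μ.map φ = μ ∧
      ∀ f : C(K, ℝ),
        Tendsto (fun i => birkhoffAverage ℝ φ f (n i) (x i)) U (𝓝 (∫ y, f y ∂μ)) := by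
  choose Λ hΛ using exists_tendsto_birkhoffAverage_ultrafilter (φ := φ) U n x
  obtain ⟨μ, _, _, hμ⟩ := exists_regular_measure_integral_eq
    (linearMapOfTendsto Λ (fun i => birkhoffFunctional φ (n i) (x i)) (tendsto_pi_nhds.2 hΛ))
    fun f hf => ge_of_tendsto' (hΛ f) fun i => birkhoffAverage_nonneg φ hf (n i) (x i)
  have hlim (f : C(K, ℝ)) :
      Tendsto (fun i => birkhoffAverage ℝ φ f (n i) (x i)) U (𝓝 (∫ y, f y ∂μ)) :=
    hμ f ▸ hΛ f
  have hreg := regular_map μ hφ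
  refine ⟨μ, inferInstance, inferInstance, measure_ext_of_integral_continuousMap fun f => ?_, hlim⟩
  rw [integral_map_continuousMap μ hφ]
  refine sub_eq_zero.1
    (tendsto_nhds_unique ?_ (tendsto_birkhoffAverage_map_sub (φ := φ) hn x f))
  refine ((hlim (f.comp ⟨φ, hφ⟩)).sub (hlim f)).congr fun i => ?_
  exact congrArg (· - _) (birkhoffAverage_comp_map ℝ φ f (n i) (x i))

end KrylovBogoliubov

section UniquenessImpliesConvergence

variable {K L : Type*} [TopologicalSpace K] [MeasurableSpace K] [BorelSpace K]
  [TopologicalSpace L] [T2Space L] [MeasurableSpace L] [BorelSpace L] {φ : K → K} {q : K → L}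

theorem measure_eq_of_existsUnique_isInvariantLift (hφ : Measurable φ) (hq : Continuous q)
    (huniq : ∀ ν : SignedMeasure L, ν.totalVariation.Regular → ∃! s, IsInvariantLift φ q ν s)
    {μ ν : Measure K} [IsFiniteMeasure μ] [IsFiniteMeasure ν] [μ.Regular] [ν.Regular]
    (hμ : μ.map φ = μ) (hν : ν.map φ = ν) (hμν : μ.map q = ν.map q) : μ = ν := by
  have hlift (m : Measure K) [IsFiniteMeasure m] [m.Regular] (hm : m.map φ = m) :
      IsInvariantLift φ q (m.map q).toSignedMeasure m.toSignedMeasure := by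
    refine ⟨⟨by rwa [totalVariation_toSignedMeasure], ?_⟩, map_toSignedMeasure m hq.measurable⟩
    rw [map_toSignedMeasure m hφ]
    simp only [hm]
  have hreg : (μ.map q).toSignedMeasure.totalVariation.Regular := by
    rw [totalVariation_toSignedMeasure]
    exact regular_map μ hq
  have hνμ := hlift ν hν
  simp only [← hμν] at hνμ
  exact Measure.toSignedMeasure_eq_toSignedMeasure_iff.1
    ((huniq _ hreg).unique (hlift μ hμ) hνμ)

variable [CompactSpace L]

theorem map_factor_eq_of_tendsto_birkhoffAverage (hq : Continuous q) (hqφ : q ∘ φ = q)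
    {ι : Type*} {l : Filter ι} [l.NeBot] {m n : ι → ℕ} (hm : Tendsto m l atTop)
    (hn : Tendsto n l atTop) {x : ι → K}
    {μ ν : Measure K} [IsFiniteMeasure μ] [IsFiniteMeasure ν] [μ.Regular] [ν.Regular]
    (hμ : ∀ f : C(K, ℝ),
      Tendsto (fun i => birkhoffAverage ℝ φ f (m i) (x i)) l (𝓝 (∫ y, f y ∂μ)))
    (hν : ∀ f : C(K, ℝ),
      Tendsto (fun i => birkhoffAverage ℝ φ f (n i) (x i)) l (𝓝 (∫ y, f y ∂ν))) :
    μ.map q = ν.map q := by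
  have hμreg := regular_map μ hq
  have hνreg := regular_map ν hq
  refine measure_ext_of_integral_continuousMap fun g => ?_
  rw [integral_map_continuousMap μ hq, integral_map_continuousMap ν hq]
  refine tendsto_nhds_unique (hμ (g.comp ⟨q, hq⟩)) ((hν (g.comp ⟨q, hq⟩)).congr' ?_)
  filter_upwards [hm.eventually_ne_atTop 0, hn.eventually_ne_atTop 0] with i hmi hni
  exact congrFun ((birkhoffAverage_comp_factor hqφ g hni).trans
    (birkhoffAverage_comp_factor hqφ g hmi).symm) (x i)

variable [CompactSpace K] [T2Space K]

theorem uniformCauchySeqOn_birkhoffAverage (hφ : Continuous φ) (hfac : IsMaximalTrivialFactor φ q)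
    (huniq : ∀ ν : SignedMeasure L, ν.totalVariation.Regular → ∃! s, IsInvariantLift φ q ν s)
    (f : C(K, ℝ)) : UniformCauchySeqOn (birkhoffAverage ℝ φ f) atTop Set.univ := by
  rw [uniformCauchySeqOn_iff_uniformCauchySeqOnFilter]
  change Tendsto
    (fun p : (ℕ × ℕ) × K => (birkhoffAverage ℝ φ f p.1.1 p.2, birkhoffAverage ℝ φ f p.1.2 p.2))
    ((atTop ×ˢ atTop) ×ˢ 𝓟 Set.univ) (𝓤 ℝ)
  refine (tendsto_iff_ultrafilter _ _ _).2 fun U hU => ?_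
  have hpair : Tendsto Prod.fst (U : Filter ((ℕ × ℕ) × K)) (atTop ×ˢ atTop) :=
    tendsto_fst.mono_left hU
  obtain ⟨μ, _, _, hμφ, hμ⟩ := exists_invariant_measure_tendsto_birkhoffAverage hφ U
    (tendsto_fst.comp hpair) Prod.snd
  obtain ⟨ν, _, _, hνφ, hν⟩ := exists_invariant_measure_tendsto_birkhoffAverage hφ U
    (tendsto_snd.comp hpair) Prod.snd
  have hqμν : μ.map q = ν.map q := map_factor_eq_of_tendsto_birkhoffAverage hfac.continuous
    hfac.comp_eq (tendsto_fst.comp hpair) (tendsto_snd.comp hpair) hμ hν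
  have hμν : μ = ν := measure_eq_of_existsUnique_isInvariantLift hφ.measurable hfac.continuous
    huniq hμφ hνφ hqμν
  exact ((hμ f).prodMk_nhds (hμν ▸ hν f)).mono_right (nhds_le_uniformity _)

theorem exists_tendstoUniformly_birkhoffAverage (hφ : Continuous φ)
    (hfac : IsMaximalTrivialFactor φ q)
    (huniq : ∀ ν : SignedMeasure L, ν.totalVariation.Regular → ∃! s, IsInvariantLift φ q ν s)
    (f : C(K, ℝ)) : ∃ g : K → ℝ, TendstoUniformly (birkhoffAverage ℝ φ f) g atTop := by
  have hcauchy := uniformCauchySeqOn_birkhoffAverage hφ hfac huniq f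
  choose g hg using fun x => cauchySeq_tendsto_of_complete (hcauchy.cauchySeq (Set.mem_univ x))
  exact ⟨g, tendstoUniformlyOn_univ.1 (hcauchy.tendstoUniformlyOn_of_tendsto fun x _ => hg x)⟩

end UniquenessImpliesConvergence

/-- Let `(K, φ)` be a topological dynamical system and `q : K → L` a
projection onto its maximal trivial factor.  Then the Koopman operator `T_φ` is mean ergodic
on `C(K)` if and only if the pushforward map `μ ↦ q_* μ` is a (linear) bijection from the
space `M_φ(K)` of `φ`-invariant regular complex Borel measures on `K` onto the space `M(L)`
of all regular complex Borel measures on `L`; since the pushforward of a regular measure is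
regular and the map is automatically linear, this is expressed by the unique-preimage
property below. -/
theorem meanErgodic_iff_pushforward_bijective
    {K L : Type*} [TopologicalSpace K] [CompactSpace K] [T2Space K]
    [MeasurableSpace K] [BorelSpace K]
    [TopologicalSpace L] [CompactSpace L] [T2Space L]
    [MeasurableSpace L] [BorelSpace L]
    (φ : K → K) (hφ : Continuous φ)
    (q : K → L) (hq : Continuous q) (hqsurj : Function.Surjective q)
    (hmax : ∀ f : C(K, ℂ), (∀ x, f (φ x) = f x) ↔ ∃ g : C(L, ℂ), f = g.comp ⟨q, hq⟩) :
    MeanErgodic φ ↔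
      ∀ ν : ComplexMeasure L, IsRegularComplexMeasure ν →
        ∃! μ : ComplexMeasure K,
          (IsRegularComplexMeasure μ ∧ μ.map φ = μ) ∧ μ.map q = ν := by
  have hfac := isMaximalTrivialFactor_of_complex hq hqsurj hmax
  rw [meanErgodic_iff_forall_real,
    forall_existsUnique_complexMeasure_iff hφ.measurable hq.measurable]
  constructor
  · intro herg ν hν
    obtain ⟨E, hE⟩ := exists_isLimitOperator hφ hfac herg
    exact hE.existsUnique_isInvariantLift hφ hfac hν
  · exact exists_tendstoUniformly_birkhoffAverage hφ hfac
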